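/- Let G be a graph with χ_P(G) = k and |V(G)| = n. For all integers m ≥ n+k+2 and ℓ ≥ m(n+1)+k+3, the path-chromatic number of R_ℓ(R_m(G)) is strictly greater than k. -/

import Mathlib

open SimpleGraph

universe u
variable {V : Type u}

/-- Closed neighborhood of a vertex set. -/
def closedNbhd (G : SimpleGraph V) (U : Set V) : Set V :=
  U ∪ {v | ∃ u ∈ U, G.Adj u v}

/-- Bag `X_ℓ = N[{v_1,…,v_ℓ}] \ {v_1,…,v_{ℓ-1}}` of the enumeration `σ`. -/
def bagX {n : ℕ} (G : SimpleGraph V) (σ : Fin n ≃ V) (ℓ : Fin n) : Set V :=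
  closedNbhd G {v | ∃ j ≤ ℓ, v = σ j} \ {v | ∃ j < ℓ, v = σ j}

/-- Chromatic number of the subgraph induced by `S`. -/
noncomputable def chrom (G : SimpleGraph V) (S : Set V) : ℕ :=
  sInf {k | (G.induce S).Colorable k}

/-- Chromatic number of the path-decomposition `P_σ^G`. -/
noncomputable def decompChrom {n : ℕ} (G : SimpleGraph V) (σ : Fin n ≃ V) : ℕ :=
  sInf {k | ∀ ℓ, (G.induce (bagX G σ ℓ)).Colorable k}

/-- `B` is a path-decomposition of `G`. -/
def IsPathDecomp (G : SimpleGraph V) {s : ℕ} (B : Fin s → Set V) : Prop :=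
  (∀ v, ∃ t, v ∈ B t) ∧
  (∀ u v, G.Adj u v → ∃ t, u ∈ B t ∧ v ∈ B t) ∧
  (∀ v (t₁ t₂ t₃ : Fin s), t₁ ≤ t₂ → t₂ ≤ t₃ → v ∈ B t₁ → v ∈ B t₃ → v ∈ B t₂)

/-- Path-chromatic number. -/
noncomputable def pathChromatic (G : SimpleGraph V) : ℕ :=
  sInf {k | ∃ (s : ℕ) (B : Fin s → Set V), IsPathDecomp G B ∧
    ∀ t, (G.induce (B t)).Colorable k}

/-- `(T, B)` is a tree-decomposition of `G`. -/
def IsTreeDecomp {ι : Type u} (G : SimpleGraph V) (T : SimpleGraph ι) (B : ι → Set V) : Prop :=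
  T.IsTree ∧
  (∀ v, ∃ t, v ∈ B t) ∧
  (∀ u v, G.Adj u v → ∃ t, u ∈ B t ∧ v ∈ B t) ∧
  (∀ v, (T.induce {t | v ∈ B t}).Connected)

/-- Tree-chromatic number. -/
noncomputable def treeChromatic (G : SimpleGraph V) : ℕ :=
  sInf {k | ∃ (ι : Type u) (T : SimpleGraph ι) (B : ι → Set V),
    IsTreeDecomp G T B ∧ ∀ t, (G.induce (B t)).Colorable k}

/-- A special enumeration. -/
def IsSpecial {n : ℕ} (G : SimpleGraph V) (σ : Fin n ≃ V) : Prop :=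
  decompChrom G σ = pathChromatic G ∧
  ∀ i : Fin n, chrom G (bagX G σ i) = pathChromatic G →
    ∀ j : Fin n, j < i → ¬ G.Adj (σ j) (σ i)

/-- The graph `R_m(G)`; the vertex `(i, none)` plays the role of `(i, v₀)`. -/
def Rm (G : SimpleGraph V) (m : ℕ) : SimpleGraph (Fin m × Option V) :=
  SimpleGraph.fromRel (fun p q =>
    (p.1 = q.1 ∧ p.2 = none) ∨
    (p.1 ≠ q.1 ∧ ∃ u v, p.2 = some u ∧ q.2 = some v ∧ G.Adj u v))

/-- `[I, U] = { (i, v) : i ∈ I, v ∈ U }` inside `R_m(G)`. -/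
def box {m : ℕ} (I : Set (Fin m)) (U : Set V) : Set (Fin m × Option V) :=
  {p | p.1 ∈ I ∧ ∃ v ∈ U, p.2 = some v}

/-- Index of the first vertex in the enumeration `μ` satisfying `P`. -/
noncomputable def firstIdx {N : ℕ} {W : Type*} (μ : Fin N ≃ W) (P : W → Prop) : ℕ :=
  sInf {ℓ : ℕ | ∃ h : ℓ < N, P (μ ⟨ℓ, h⟩)}

/-- The cycle `C_n`: `v_j ~ v_{j'}` iff `|j - j'| ∈ {1, n-1}`. -/
def cyc (n : ℕ) : SimpleGraph (Fin n) :=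
  SimpleGraph.fromRel (fun a b => (b : ℕ) - (a : ℕ) = 1 ∨ (b : ℕ) - (a : ℕ) = n - 1)

/-- The Mycielskian of a graph. -/
def mycielskian (G : SimpleGraph V) : SimpleGraph (Option (V ⊕ V)) :=
  SimpleGraph.fromRel (fun a b =>
    match a, b with
    | some (Sum.inl u), some (Sum.inl v) => G.Adj u v
    | some (Sum.inr u), some (Sum.inl v) => G.Adj u v
    | none, some (Sum.inr _) => True
    | _, _ => False)

/-- Vertex types and graphs of the Mycielski family: `MycS 2` is a single edge. -/
def MycS : ℕ → Σ W : Type, SimpleGraph W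
  | 0 => ⟨Empty, ⊥⟩
  | 1 => ⟨Empty, ⊥⟩
  | 2 => ⟨Fin 2, ⊤⟩
  | (n + 3) => ⟨Option ((MycS (n + 2)).1 ⊕ (MycS (n + 2)).1), mycielskian (MycS (n + 2)).2⟩

/-- The vertex type of the `k`-Mycielski graph. -/
def MycV (k : ℕ) : Type := (MycS k).1

/-- The `k`-Mycielski graph `M_k`. -/
def Myc (k : ℕ) : SimpleGraph (MycV k) := (MycS k).2

/-!
Assume `R_ℓ(R_m(G))` has a path-decomposition with `(K + 1)`-colourable bags, and think of a
path-decomposition as sweeping away the vertices in rounds, the bag of a round being the closed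
neighbourhood of everything swept so far minus what was swept before the round.

For a sweep of `R_m(G)`, let a vertex `v` of `G` be touched once the first of its copies is swept.
As `m > |V(G)|`, there are many layers in which no vertex is touched for the first time. Such a
layer has an unswept copy of each neighbour of a touched vertex until it is swept itself, so a
`c`-colouring of a bag gives every such neighbour a colour occurring in two layers. Such colours
form a proper colouring of `G`, and the presence of an apex `(b, v₀)` in the bag frees one colour.

Applied to `R_ℓ(H)` with `H = R_m(G)`, this makes the touch order a sweep of `H` in which only
rounds without edges to swept vertices may need more than `K` colours. Applied to that special sweep
of `R_m(G)`, it gives a sweep of `G` whose bags are all `K`-colourable, so `χ_P(G) ≤ K`.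
-/

/-! ### Neighbourhoods and colourings of induced subgraphs -/

section Colorings

variable {G : SimpleGraph V} {X Y D U : Set V} {c : ℕ}

/-- Open neighbourhood `N(U)` of a vertex set; unlike `closedNbhd G U \ U`, it contains the vertices
of `U` that have a neighbour in `U`. -/
def openNbhd (G : SimpleGraph V) (U : Set V) : Set V :=
  {v | ∃ u ∈ U, G.Adj u v}

/-- The vertices of `U` without neighbours in `U`. -/
def isolatedIn (G : SimpleGraph V) (U : Set V) : Set V :=
  U \ openNbhd G U

lemma closedNbhd_subset_openNbhd_union_isolatedIn :
    closedNbhd G U ⊆ openNbhd G U ∪ isolatedIn G U := by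
  rintro v (hv | hv)
  · by_cases h : v ∈ openNbhd G U
    exacts [.inl h, .inr ⟨hv, h⟩]
  · exact .inl hv

lemma closedNbhd_mono (h : X ⊆ Y) : closedNbhd G X ⊆ closedNbhd G Y := by
  rintro v (hv | ⟨u, hu, huv⟩)
  exacts [.inl (h hv), .inr ⟨u, h hu, huv⟩]

lemma not_adj_of_mem_isolatedIn {u v : V} (hu : u ∈ U) (hv : v ∈ isolatedIn G U) : ¬ G.Adj u v :=
  fun huv => hv.2 ⟨u, hu, huv⟩

lemma colorable_induce_mono (h : (G.induce X).Colorable c) (hYX : Y ⊆ X) :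
    (G.induce Y).Colorable c :=
  h.of_hom (G.induceHomOfLE hYX).toHom

lemma colorable_induce_union_of_independent (hY : (G.induce Y).Colorable c)
    (hD : ∀ u ∈ D, ∀ v ∈ D, ¬ G.Adj u v) : (G.induce (Y ∪ D)).Colorable (c + 1) := by
  classical
  obtain ⟨C⟩ := hY
  let φ : ↥(Y ∪ D) → Option (Fin c) := fun v => if h : (v : V) ∈ Y then some (C ⟨v, h⟩) else none
  have hφ : ∀ {u v : ↥(Y ∪ D)}, G.Adj u v → φ u ≠ φ v := by
    intro u v huv
    by_cases hu : (u : V) ∈ Y <;> by_cases hv : (v : V) ∈ Y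
    · simpa [φ, hu, hv] using C.valid (v := ⟨u, hu⟩) (w := ⟨v, hv⟩) huv
    · simp [φ, hu, hv]
    · simp [φ, hu, hv]
    · exact absurd huv (hD u (u.2.resolve_left hu) v (v.2.resolve_left hv))
  simpa using (Coloring.mk φ hφ).colorable

end Colorings

/-! ### Path-decompositions as sweeps -/

section Sweeps

variable {W : Type*} {G : SimpleGraph V} {H : SimpleGraph W} {c K : ℕ}

/-- `G` has a path-decomposition all of whose bags are `c`-colourable. -/
def PathColorable (G : SimpleGraph V) (c : ℕ) : Prop :=
  ∃ (s : ℕ) (B : Fin s → Set V), IsPathDecomp G B ∧ ∀ t, (G.induce (B t)).Colorable c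

lemma pathChromatic_le (h : PathColorable G c) : pathChromatic G ≤ c :=
  Nat.sInf_le h

lemma pathColorable_card [Fintype V] (G : SimpleGraph V) : PathColorable G (Fintype.card V) :=
  ⟨1, fun _ => Set.univ, ⟨fun _ => ⟨0, trivial⟩, fun _ _ _ => ⟨0, trivial, trivial⟩,
    fun _ _ _ _ _ _ _ _ => trivial⟩,
    fun _ => G.colorable_of_fintype.of_hom (Embedding.induce Set.univ).toHom⟩

lemma pathColorable_of_pathChromatic_le [Finite V] (h : pathChromatic G ≤ c) :
    PathColorable G c := by
  have := Fintype.ofFinite V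
  have hne : {c | PathColorable G c}.Nonempty := ⟨_, pathColorable_card G⟩
  obtain ⟨s, B, hB, hcol⟩ : PathColorable G (pathChromatic G) := Nat.sInf_mem hne
  exact ⟨s, B, hB, fun t => (hcol t).mono h⟩

lemma PathColorable.isEmpty (h : PathColorable G 0) : IsEmpty V := by
  obtain ⟨s, B, ⟨hcover, -, -⟩, hcol⟩ := h
  refine ⟨fun v => ?_⟩
  obtain ⟨t, hv⟩ := hcover v
  exact (hcol t).isEmpty.false ⟨v, hv⟩

lemma PathColorable.of_hom (h : PathColorable H c) (g : G →g H) : PathColorable G c := by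
  obtain ⟨s, B, ⟨hcover, hedge, hconvex⟩, hcol⟩ := h
  exact ⟨s, fun t => g ⁻¹' B t, ⟨fun v => hcover (g v), fun u v huv => hedge _ _ (g.map_adj huv),
    fun v => hconvex (g v)⟩, fun t => (hcol t).of_hom (induceHom g (Set.mapsTo_preimage g (B t)))⟩

/-- The bag at time `t` when each vertex `u` is swept at time `f u`; for injective `f` these are the
bags `bagX` of the corresponding enumeration. -/
def timeBag (G : SimpleGraph V) (f : V → ℕ) (t : ℕ) : Set V :=
  closedNbhd G {u | f u ≤ t} \ {u | f u < t}

lemma mem_timeBag_self (f : V → ℕ) (v : V) : v ∈ timeBag G f (f v) :=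
  ⟨.inl (le_refl (f v)), lt_irrefl (f v)⟩

lemma mem_timeBag_of_adj {f : V → ℕ} {t : ℕ} {u v : V} (huv : G.Adj u v) (hu : f u ≤ t)
    (hv : t ≤ f v) : v ∈ timeBag G f t :=
  ⟨.inr ⟨u, hu, huv⟩, hv.not_gt⟩

lemma isPathDecomp_timeBag (G : SimpleGraph V) {f : V → ℕ} {s : ℕ} (hf : ∀ v, f v < s) :
    IsPathDecomp G fun t : Fin s => timeBag G f t := by
  refine ⟨fun v => ⟨⟨f v, hf v⟩, mem_timeBag_self f v⟩, fun u v huv => ?_, ?_⟩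
  · rcases le_total (f u) (f v) with h | h
    · exact ⟨⟨f u, hf u⟩, mem_timeBag_self f u, mem_timeBag_of_adj huv le_rfl h⟩
    · exact ⟨⟨f v, hf v⟩, mem_timeBag_of_adj huv.symm le_rfl h, mem_timeBag_self f v⟩
  · rintro v t₁ t₂ t₃ h₁₂ h₂₃ ⟨hv₁, -⟩ ⟨-, hv₃⟩
    exact ⟨closedNbhd_mono (fun u (hu : f u ≤ t₁) => hu.trans h₁₂) hv₁,
      fun (hv : f v < t₂) => hv₃ (hv.trans_le h₂₃)⟩

/-- Sweep each vertex at the index of the last bag containing it. -/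
lemma IsPathDecomp.exists_timeBag_subset {s : ℕ} {B : Fin s → Set V} (hB : IsPathDecomp G B) :
    ∃ f : V → Fin s, ∀ t : Fin s, timeBag G (fun v => f v) t ⊆ B t := by
  obtain ⟨hcover, hedge, hconvex⟩ := hB
  have hlast : ∀ v, ∃ t, v ∈ B t ∧ ∀ t', v ∈ B t' → t' ≤ t := fun v =>
    Set.exists_max_image {t | v ∈ B t} id (Set.toFinite _) (hcover v)
  choose f hf hmax using hlast
  refine ⟨f, ?_⟩
  rintro t v ⟨hv, hlt⟩
  have htv : t ≤ f v := not_lt.mp hlt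
  obtain ⟨t', ht', hvt'⟩ : ∃ t' ≤ t, v ∈ B t' := by
    rcases hv with hvt | ⟨u, hut, huv⟩
    · exact ⟨f v, hvt, hf v⟩
    · obtain ⟨t', hu, hv'⟩ := hedge u v huv
      exact ⟨t', (hmax u t' hu).trans hut, hv'⟩
  exact hconvex v t' t (f v) ht' htv hvt' (hf v)

lemma PathColorable.exists_time (h : PathColorable G c) :
    ∃ f : V → ℕ, ∀ v, (G.induce (timeBag G f (f v))).Colorable c := by
  obtain ⟨s, B, hB, hcol⟩ := h
  obtain ⟨f, hf⟩ := hB.exists_timeBag_subset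
  exact ⟨fun v => f v, fun v => colorable_induce_mono (hcol (f v)) (hf (f v))⟩

/-- `Q` can be swept by rounds related by `S`, where `S Q E` says that a round may extend the swept
set `Q` to the larger set `E`. -/
def Sweepable (S : Set V → Set V → Prop) : Set V → Prop :=
  Relation.ReflTransGen (fun Q E => Q ⊆ E ∧ S Q E) ∅

/-- A round from `Q` to `E` whose bag is `c`-colourable. -/
def ColorableStep (G : SimpleGraph V) (c : ℕ) (Q E : Set V) : Prop :=
  (G.induce (closedNbhd G E \ Q)).Colorable c

/-- A round from `Q` to `E` whose bag is `K`-colourable unless the new vertices have no neighbours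
among the swept ones. With `K = χ_P(G) - 1` this is the condition of `IsSpecial`, for rounds instead
of single vertices. -/
def SpecialStep (G : SimpleGraph V) (K : ℕ) (Q E : Set V) : Prop :=
  (∀ u ∈ E, ∀ v ∈ E \ Q, ¬ G.Adj u v) ∨ ColorableStep G K Q E

lemma Sweepable.exists_time_of_eq {S : Set V → Set V → Prop} {Q : Set V} (h : Sweepable S Q) :
    ∃ (f : V → ℕ) (s : ℕ), {v | f v < s} = Q ∧ ∀ t < s, S {v | f v < t} {v | f v ≤ t} := by
  classical
  induction h with
  | refl => exact ⟨fun _ => 0, 0, by simp, by simp⟩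
  | @tail Q E _ hstep ih =>
    obtain ⟨f, s, rfl, hf⟩ := ih
    obtain ⟨hQE, hS⟩ := hstep
    let f' : V → ℕ := fun v => if f v < s then f v else if v ∈ E then s else s + 1
    have hlt : ∀ t ≤ s, {v | f' v < t} = {v | f v < t} := by
      intro t ht
      ext v
      simp only [f', Set.mem_ofPred_eq]
      split_ifs <;> omega
    have hE : {v | f' v < s + 1} = E := by
      ext v
      have : f v < s → v ∈ E := fun hv => hQE hv
      simp only [f', Set.mem_ofPred_eq]
      split_ifs <;> grind
    refine ⟨f', s + 1, hE, fun t ht => ?_⟩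
    simp only [← Nat.lt_succ_iff, Nat.succ_eq_add_one]
    rcases Nat.lt_succ_iff_lt_or_eq.mp ht with ht | rfl
    · rw [hlt t ht.le, hlt (t + 1) ht]
      simpa only [Nat.lt_succ_iff] using hf t ht
    · rwa [hlt t le_rfl, hE]

lemma Sweepable.exists_time {S : Set V → Set V → Prop} (h : Sweepable S Set.univ) :
    ∃ (f : V → ℕ) (s : ℕ), (∀ v, f v < s) ∧ ∀ t < s, S {v | f v < t} {v | f v ≤ t} := by
  obtain ⟨f, s, hs, hf⟩ := h.exists_time_of_eq
  exact ⟨f, s, Set.eq_univ_iff_forall.mp hs, hf⟩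

lemma pathColorable_of_sweepable (h : Sweepable (ColorableStep G c) Set.univ) :
    PathColorable G c := by
  obtain ⟨f, s, hs, hf⟩ := h.exists_time
  exact ⟨s, fun t => timeBag G f t, isPathDecomp_timeBag G hs, fun t => hf t t.2⟩

lemma Sweepable.exists_special_time (h : Sweepable (SpecialStep G K) Set.univ) :
    ∃ f : V → ℕ, ∀ u v, G.Adj u v → f u ≤ f v → (G.induce (timeBag G f (f v))).Colorable K := by
  obtain ⟨f, s, hs, hf⟩ := h.exists_time
  refine ⟨f, fun u v huv hle => (hf (f v) (hs v)).resolve_left fun hindep => ?_⟩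
  exact hindep u hle v ⟨le_refl (f v), lt_irrefl (f v)⟩ huv

/-- The vertices isolated in `E` are swept first: that round needs no colouring, and they are the
only vertices of the bag outside the open neighbourhood. -/
lemma Sweepable.extend_special {Q E : Set V} (h : Sweepable (SpecialStep G K) Q) (hQE : Q ⊆ E)
    (hcol : (G.induce (openNbhd G E \ Q)).Colorable K) : Sweepable (SpecialStep G K) E := by
  have hE : Q ∪ isolatedIn G E ⊆ E := Set.union_subset hQE Set.sdiff_subset
  have hisolated : SpecialStep G K Q (Q ∪ isolatedIn G E) :=
    .inl fun u hu v hv => not_adj_of_mem_isolatedIn (hE hu) (hv.1.resolve_left hv.2)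
  have hrest : SpecialStep G K (Q ∪ isolatedIn G E) E := by
    refine .inr (colorable_induce_mono hcol ?_)
    rintro v ⟨hv, hnot⟩
    exact ⟨(closedNbhd_subset_openNbhd_union_isolatedIn hv).resolve_right fun h => hnot (.inr h),
      fun h => hnot (.inl h)⟩
  exact (h.tail ⟨Set.subset_union_left, hisolated⟩).tail ⟨hE, hrest⟩

lemma univ_of_sublevel_progress [Finite V] {P : Set V → Prop} (g : V → ℕ) (hempty : P ∅)
    (hprogress : ∀ T, P {v | g v < T} → {v | g v < T} ≠ Set.univ →
      P Set.univ ∨ ∃ t > T, P {v | g v < t}) : P Set.univ := by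
  by_contra hcon
  have hlarge : ∀ n, ∃ T ≥ n, P {v | g v < T} := by
    intro n
    induction n with
    | zero => exact ⟨0, le_rfl, by simpa using hempty⟩
    | succ n ih =>
      obtain ⟨T, hT, hP⟩ := ih
      obtain ⟨t, ht, hP'⟩ := (hprogress T hP fun h => hcon (h ▸ hP)).resolve_left hcon
      exact ⟨t, by omega, hP'⟩
  obtain ⟨M, hM⟩ := (Set.finite_range g).bddAbove
  obtain ⟨T, hT, hP⟩ := hlarge (M + 1)
  have huniv : {v | g v < T} = Set.univ :=
    Set.eq_univ_of_forall fun v => (Nat.lt_succ_of_le (hM ⟨v, rfl⟩)).trans_le hT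
  exact hcon (huniv ▸ hP)

end Sweeps

/-! ### Colourings of `R_m(G)` -/

section Layers

variable {W : Type*} {G : SimpleGraph V} {H : SimpleGraph W} {l m c K : ℕ}

@[simp]
lemma Rm_adj_some_some {i j : Fin m} {u v : V} :
    (Rm G m).Adj (i, some u) (j, some v) ↔ i ≠ j ∧ G.Adj u v := by
  simp only [Rm, fromRel_adj]
  grind [G.adj_comm u v]

@[simp]
lemma Rm_adj_none_some {i j : Fin m} {v : V} : (Rm G m).Adj (i, none) (j, some v) ↔ i = j := by
  simp [Rm]

@[simp]
lemma Rm_adj_some_none {i j : Fin m} {v : V} : (Rm G m).Adj (i, some v) (j, none) ↔ i = j := by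
  rw [adj_comm, Rm_adj_none_some, eq_comm]

@[simp]
lemma not_Rm_adj_none_none {i j : Fin m} : ¬ (Rm G m).Adj (i, none) (j, none) := by
  simp [Rm, eq_comm]

/-- `R` is functorial in the graph and in the set of layers. -/
def Rm.map (e : Fin m ↪ Fin l) (g : G →g H) : Rm G m →g Rm H l where
  toFun := Prod.map e (Option.map g)
  map_rel' := by
    rintro ⟨i, _ | u⟩ ⟨j, _ | v⟩ h
    · exact absurd h not_Rm_adj_none_none
    · simpa using h
    · simpa using h
    · exact Rm_adj_some_some.mpr ⟨e.injective.ne (Rm_adj_some_some.mp h).1,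
        g.map_adj (Rm_adj_some_some.mp h).2⟩

variable {X : Set (Fin m × Option V)} {Y D : Set V} {J : Finset (Fin m)} {b : Fin m}

/-- Colour `v` by a colour that two of its copies share: for every layer, one of these two copies
lies in a different layer. -/
lemma exists_layer_coloring {α : Type*} [Fintype α] (C : ((Rm G m).induce X).Coloring α)
    (hJ : Fintype.card α < J.card) (hY : ∀ j ∈ J, ∀ v ∈ Y, (j, some v) ∈ X) :
    ∃ φ : (G.induce Y).Coloring α,
      ∀ (u : Y) (v : V) (i : Fin m) (h : (i, some v) ∈ X), G.Adj u v → φ u ≠ C ⟨_, h⟩ := by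
  have hrepeat : ∀ v : Y, ∃ i j : J, i ≠ j ∧
      C ⟨(i, some v), hY i i.2 v v.2⟩ = C ⟨(j, some v), hY j j.2 v v.2⟩ := fun v =>
    Fintype.exists_ne_map_eq_of_card_lt (fun j : J => C ⟨(j, some v), hY j j.2 v v.2⟩) (by simpa)
  choose i j hij hC using hrepeat
  let φ : Y → α := fun v => C ⟨(i v, some v), hY (i v) (i v).2 v v.2⟩
  have hφ : ∀ (u : Y) (v : V) (k : Fin m) (h : (k, some v) ∈ X), G.Adj u v → φ u ≠ C ⟨_, h⟩ := by
    intro u v k h huv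
    by_cases hk : (i u : Fin m) = k
    · have hjk : (j u : Fin m) ≠ k := fun h' => hij u (Subtype.ext (hk.trans h'.symm))
      exact (hC u).trans_ne (C.valid (Rm_adj_some_some.mpr ⟨hjk, huv⟩))
    · exact C.valid (Rm_adj_some_some.mpr ⟨hk, huv⟩)
  exact ⟨.mk φ fun {u v} huv => hφ u v _ _ huv, hφ⟩

/-- Where the shared colour is that of the apex, use the colour of the copy in the apex's layer. -/
lemma colorable_induce_of_apex_mem (hX : ((Rm G m).induce X).Colorable (K + 1))
    (hJ : K + 1 < J.card) (hY : ∀ j ∈ J, ∀ v ∈ Y, (j, some v) ∈ X) (hb : b ∈ J)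
    (hapex : (b, none) ∈ X) : (G.induce Y).Colorable K := by
  obtain ⟨C⟩ := hX
  obtain ⟨φ, hφ⟩ := exists_layer_coloring C (by simpa) hY
  let apexColor : Fin (K + 1) := C ⟨_, hapex⟩
  let layerColor : Y → Fin (K + 1) := fun v => C ⟨_, hY b hb v v.2⟩
  have hlayer : ∀ v, layerColor v ≠ apexColor := fun v => C.valid (Rm_adj_some_none.mpr rfl)
  let ψ : Y → {x // x ≠ apexColor} := fun v =>
    if h : φ v = apexColor then ⟨layerColor v, hlayer v⟩ else ⟨φ v, h⟩
  have hψ : ∀ {u v : Y}, G.Adj u v → ψ u ≠ ψ v := by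
    intro u v huv
    have hne : φ u ≠ φ v := φ.valid huv
    have huv' : φ u ≠ layerColor v := hφ u v b _ huv
    have hvu' : φ v ≠ layerColor u := hφ v u b _ huv.symm
    grind
  simpa using (Coloring.mk ψ hψ).colorable

lemma colorable_induce_union_of_layer (hX : ((Rm G m).induce X).Colorable c) (hJ : c < J.card)
    (hY : ∀ j ∈ J, ∀ v ∈ Y, (j, some v) ∈ X) (hD : ∀ v ∈ D, (b, some v) ∈ X)
    (hindep : ∀ u ∈ D, ∀ v ∈ D, ¬ G.Adj u v) : (G.induce (Y ∪ D)).Colorable c := by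
  classical
  obtain ⟨C⟩ := hX
  obtain ⟨φ, hφ⟩ := exists_layer_coloring C (by simpa) hY
  let ψ : ↥(Y ∪ D) → Fin c := fun v =>
    if h : (v : V) ∈ Y then φ ⟨v, h⟩ else C ⟨_, hD v (v.2.resolve_left h)⟩
  refine ⟨.mk ψ fun {u v} huv => ?_⟩
  by_cases hu : (u : V) ∈ Y <;> by_cases hv : (v : V) ∈ Y
  · simpa [ψ, hu, hv] using φ.valid (v := ⟨u, hu⟩) (w := ⟨v, hv⟩) huv
  · simpa [ψ, hu, hv] using hφ ⟨u, hu⟩ v b _ huv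
  · simpa [ψ, hu, hv] using (hφ ⟨v, hv⟩ u b _ huv.symm).symm
  · exact absurd huv (hindep u (u.2.resolve_left hu) v (v.2.resolve_left hv))

end Layers

/-! ### Touch times and fresh layers -/

section Touch

variable {G : SimpleGraph V} {m c K t : ℕ} {f : Fin m × Option V → ℕ} {J : Finset (Fin m)}
  {Q E : Set V} {b : Fin m}

/-- The first time at which a copy of `v` is swept; `0` if there are no layers. -/
noncomputable def touchTime (f : Fin m × Option V → ℕ) (v : V) : ℕ :=
  ⨅ i, f (i, some v)

/-- Every vertex of `G` is first touched in a layer outside `J`. -/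
def IsFresh (f : Fin m × Option V → ℕ) (J : Finset (Fin m)) : Prop :=
  ∀ v, ∃ i ∉ J, f (i, some v) = touchTime f v

lemma touchTime_le (f : Fin m × Option V → ℕ) (i : Fin m) (v : V) : touchTime f v ≤ f (i, some v) :=
  ciInf_le' _ i

lemma IsFresh.mono {J' : Finset (Fin m)} (h : IsFresh f J) (hJ : J' ⊆ J) : IsFresh f J' := fun v =>
  let ⟨i, hi, hv⟩ := h v
  ⟨i, fun hi' => hi (hJ hi'), hv⟩

lemma exists_isFresh [Fintype V] (hm : Fintype.card V + c < m) (f : Fin m × Option V → ℕ) :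
    ∃ J, IsFresh f J ∧ c < J.card := by
  classical
  have : Nonempty (Fin m) := ⟨⟨0, by omega⟩⟩
  have htouch : ∀ v, ∃ i, f (i, some v) = touchTime f v := fun v =>
    Nat.sInf_mem (Set.range_nonempty fun i => f (i, some v))
  choose a ha using htouch
  refine ⟨(Finset.univ.image a)ᶜ, fun v => ⟨a v, by simp, ha v⟩, ?_⟩
  have : (Finset.univ.image a).card ≤ Fintype.card V := Finset.card_image_le
  rw [Finset.card_compl, Fintype.card_fin]
  omega

lemma IsFresh.mem_timeBag (hJ : IsFresh f J) (hE : ∀ u ∈ E, touchTime f u ≤ t) {j : Fin m}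
    (hj : j ∈ J) {v : V} (hv : v ∈ openNbhd G E) (ht : t ≤ f (j, some v)) :
    (j, some v) ∈ timeBag (Rm G m) f t := by
  obtain ⟨u, hu, huv⟩ := hv
  obtain ⟨i, hi, hiu⟩ := hJ u
  refine mem_timeBag_of_adj (u := (i, some u)) ?_ (hiu.trans_le (hE u hu)) ht
  exact Rm_adj_some_some.mpr ⟨fun h => hi (h ▸ hj), huv⟩

lemma IsFresh.colorable_openNbhd (hJ : IsFresh f J) (hcard : K + 1 < J.card)
    (hbag : ((Rm G m).induce (timeBag (Rm G m) f t)).Colorable (K + 1)) (hb : b ∈ J)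
    (hapex : (b, none) ∈ timeBag (Rm G m) f t) (hE : ∀ u ∈ E, touchTime f u ≤ t)
    (hunswept : ∀ j ∈ J, ∀ v ∈ openNbhd G E \ Q, t ≤ f (j, some v)) :
    (G.induce (openNbhd G E \ Q)).Colorable K :=
  colorable_induce_of_apex_mem hbag hcard
    (fun j hj v hv => hJ.mem_timeBag hE hj hv.1 (hunswept j hj v hv)) hb hapex

end Touch

/-! ### A sweep of `R_m(G)` yields a special sweep of `G` -/

section Special

variable {G : SimpleGraph V} {m K T : ℕ} {f : Fin m × Option V → ℕ} {J : Finset (Fin m)}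
  {Q : Set V}

/-- Take the bag of the last apex to be swept. -/
lemma colorable_compl_of_apexes_swept
    (hf : ∀ x, ((Rm G m).induce (timeBag (Rm G m) f (f x))).Colorable (K + 1))
    (hcard : K + 1 < J.card) (hQ : ∀ v ∉ Q, ∀ i, T ≤ f (i, some v))
    (hswept : ∀ b ∈ J, f (b, none) < T) : (G.induce Qᶜ).Colorable K := by
  obtain ⟨b, hb, hmax⟩ := J.exists_max_image (fun b => f (b, none)) (Finset.card_pos.mp (by omega))
  refine colorable_induce_of_apex_mem (hf (b, none)) hcard (fun j hj v hv => ?_) hb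
    (mem_timeBag_self f _)
  exact mem_timeBag_of_adj (Rm_adj_none_some.mpr rfl) (hmax j hj)
    ((hswept b hb).le.trans (hQ v hv j))

/-- Take the bag in which the layers of `J` are first swept, after time `T`. -/
lemma IsFresh.exists_colorable_openNbhd (hJ : IsFresh f J)
    (hf : ∀ x, ((Rm G m).induce (timeBag (Rm G m) f (f x))).Colorable (K + 1))
    (hcard : K + 1 < J.card) (hQ : ∀ v ∉ Q, ∀ i, T ≤ f (i, some v))
    (hunswept : ∀ b ∈ J, T ≤ f (b, none)) :
    ∃ t > T, (G.induce (openNbhd G {v | touchTime f v < t} \ Q)).Colorable K := by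
  let S : Set (Fin m × Option V) := {x | x.1 ∈ J ∧ ∀ v ∈ x.2, v ∉ Q}
  obtain ⟨b₀, hb₀⟩ := Finset.card_pos.mp (by omega : 0 < J.card)
  have hS : S.Nonempty := ⟨(b₀, none), hb₀, by simp⟩
  obtain ⟨⟨b, a⟩, ⟨hb, ha⟩, hmin⟩ : ∃ x ∈ S, ∀ y ∈ S, f x ≤ f y :=
    ⟨_, Function.argminOn_mem f S hS, fun _ => Function.argminOn_le f S⟩
  have hT : T ≤ f (b, a) := by
    obtain _ | v := a
    exacts [hunswept b hb, hQ v (ha v rfl) b]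
  have hapex : (b, none) ∈ timeBag (Rm G m) f (f (b, a)) := by
    obtain _ | v := a
    · exact mem_timeBag_self f _
    · exact mem_timeBag_of_adj (Rm_adj_some_none.mpr rfl) le_rfl (hmin _ ⟨hb, by simp⟩)
  exact ⟨f (b, a) + 1, by omega, hJ.colorable_openNbhd hcard (hf _) hb hapex
    (fun u hu => Nat.lt_succ_iff.mp hu) fun j hj v hv => hmin _ ⟨hj, by simpa using hv.2⟩⟩

theorem sweepable_special_of_pathColorable_Rm [Fintype V] (hm : Fintype.card V + (2 * K + 2) < m)
    (h : PathColorable (Rm G m) (K + 1)) : Sweepable (SpecialStep G K) Set.univ := by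
  obtain ⟨f, hf⟩ := h.exists_time
  obtain ⟨J, hJ, hcard⟩ := exists_isFresh hm f
  refine univ_of_sublevel_progress (touchTime f) .refl fun T hT _ => ?_
  have hQ : ∀ v ∉ {v | touchTime f v < T}, ∀ i, T ≤ f (i, some v) := fun v hv i =>
    (not_lt.mp hv).trans (touchTime_le f i v)
  have hsplit := J.card_filter_add_card_filter_not fun b => f (b, none) < T
  by_cases hswept : K + 1 < (J.filter fun b => f (b, none) < T).card
  · refine .inl (hT.extend_special (Set.subset_univ _) ?_)
    refine colorable_induce_mono ?_ fun v hv => hv.2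
    exact colorable_compl_of_apexes_swept hf hswept hQ fun b hb => (Finset.mem_filter.mp hb).2
  · obtain ⟨t, ht, hcol⟩ := (hJ.mono (Finset.filter_subset _ J)).exists_colorable_openNbhd hf
      (by omega : K + 1 < (J.filter fun b => ¬ f (b, none) < T).card) hQ
      fun b hb => not_lt.mp (Finset.mem_filter.mp hb).2
    exact .inr ⟨t, ht, hT.extend_special (fun v hv => hv.trans ht) hcol⟩

end Special

/-! ### A special sweep of `R_m(G)` yields a better sweep of `G` -/

section Improved

variable {G : SimpleGraph V} {m c t T : ℕ} {f : Fin m × Option V → ℕ} {J : Finset (Fin m)}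
  {Q E : Set V} {b : Fin m}

lemma not_adj_isolatedIn (u : V) (hu : u ∈ isolatedIn G E) (v : V) (hv : v ∈ isolatedIn G E) :
    ¬ G.Adj u v :=
  not_adj_of_mem_isolatedIn hu.1 hv

/-- The vertices isolated in `E` all get the colour of the apex. -/
lemma IsFresh.colorableStep_of_apex_mem (hJ : IsFresh f J) (hcard : c < J.card)
    (hbag : ((Rm G m).induce (timeBag (Rm G m) f t)).Colorable c) (hb : b ∈ J)
    (hapex : (b, none) ∈ timeBag (Rm G m) f t) (hE : ∀ u ∈ E, touchTime f u ≤ t)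
    (hunswept : ∀ j ∈ J, ∀ v ∈ openNbhd G E \ Q, t ≤ f (j, some v)) :
    ColorableStep G c Q E := by
  obtain _ | K := c
  · exact (hbag.isEmpty.false ⟨_, hapex⟩).elim
  · refine colorable_induce_mono (colorable_induce_union_of_independent
      (hJ.colorable_openNbhd hcard hbag hb hapex hE hunswept)
      (not_adj_isolatedIn (E := E))) ?_
    rintro v ⟨hv, hvQ⟩
    exact (closedNbhd_subset_openNbhd_union_isolatedIn hv).imp_left fun h => ⟨h, hvQ⟩

/-- The vertices isolated in `E` get the colours of their copies in the layer of a swept apex. -/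
lemma IsFresh.colorableStep_of_apex_swept (hJ : IsFresh f J) (hcard : c < J.card)
    (hbag : ((Rm G m).induce (timeBag (Rm G m) f t)).Colorable c) (hb : b ∈ J)
    (hswept : f (b, none) ≤ t) (hE : ∀ u ∈ E, touchTime f u ≤ t)
    (hunswept : ∀ j ∈ J, ∀ v ∉ Q, t ≤ f (j, some v)) : ColorableStep G c Q E := by
  refine colorable_induce_mono (colorable_induce_union_of_layer hbag hcard (b := b)
    (Y := openNbhd G E \ Q) (D := isolatedIn G E \ Q)
    (fun j hj v hv => hJ.mem_timeBag hE hj hv.1 (hunswept j hj v hv.2))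
    (fun v hv => mem_timeBag_of_adj (Rm_adj_none_some.mpr rfl) hswept (hunswept b hb v hv.2))
    fun u hu v hv => not_adj_isolatedIn u hu.1 v hv.1) ?_
  rintro v ⟨hv, hvQ⟩
  exact (closedNbhd_subset_openNbhd_union_isolatedIn hv).imp (⟨·, hvQ⟩) (⟨·, hvQ⟩)

/-- While the apex of a layer of `J` is not swept, wait for the next `c`-colourable bag: until then
no two adjacent vertices are swept, so the layers of `J` keep the copies of all neighbours. -/
lemma IsFresh.exists_colorableStep_of_apex_unswept (hJ : IsFresh f J) (hcard : c < J.card)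
    (hf : ∀ x y, (Rm G m).Adj x y → f x ≤ f y →
      ((Rm G m).induce (timeBag (Rm G m) f (f y))).Colorable c)
    (hQ : ∀ j ∈ J, ∀ v ∉ Q, t ≤ f (j, some v)) (hb : b ∈ J) {v : V} (hbv : f (b, some v) = t)
    (hunswept : t < f (b, none)) :
    ∃ t' > t, ColorableStep G c Q {v | touchTime f v < t'} := by
  let S : Set (Fin m × Option V) := {y | t ≤ f y ∧ ∃ x, (Rm G m).Adj x y ∧ f x ≤ f y}
  have hbadj : (Rm G m).Adj (b, some v) (b, none) := Rm_adj_some_none.mpr rfl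
  have hbS : (b, none) ∈ S := ⟨hunswept.le, _, hbadj, hbv.trans_le hunswept.le⟩
  let y := Function.argminOn f S ⟨_, hbS⟩
  have hmin : ∀ z ∈ S, f y ≤ f z := fun z hz => Function.argminOn_le f S hz
  obtain ⟨hty, x, hxy, hle⟩ : y ∈ S := Function.argminOn_mem f S ⟨_, hbS⟩
  have hbag := hf x y hxy hle
  have hapex : (b, none) ∈ timeBag (Rm G m) f (f y) :=
    mem_timeBag_of_adj hbadj (hbv.trans_le hty) (hmin _ hbS)
  rcases hty.eq_or_lt with heq | hlt
  · refine ⟨t + 1, t.lt_succ_self, hJ.colorableStep_of_apex_mem hcard hbag hb hapex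
      (fun u hu => heq ▸ Nat.lt_succ_iff.mp hu) fun j hj v hv => heq ▸ hQ j hj v hv.2⟩
  · refine ⟨f y, hlt, hJ.colorableStep_of_apex_mem hcard hbag hb hapex
      (fun u hu => le_of_lt hu) ?_⟩
    rintro j hj w ⟨⟨u, hu, huw⟩, hwQ⟩
    obtain ⟨i, hi, hiu⟩ := hJ u
    have hadj : (Rm G m).Adj (i, some u) (j, some w) :=
      Rm_adj_some_some.mpr ⟨fun h => hi (h ▸ hj), huw⟩
    have htw : t ≤ f (j, some w) := hQ j hj w hwQ
    rcases le_total (f (i, some u)) (f (j, some w)) with hle | hle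
    · exact hmin _ ⟨htw, _, hadj, hle⟩
    · exact absurd (hmin _ ⟨htw.trans hle, _, hadj.symm, hle⟩) (hiu.trans_lt hu).not_ge

lemma IsFresh.exists_colorableStep (hJ : IsFresh f J) (hcard : c < J.card)
    (hf : ∀ x y, (Rm G m).Adj x y → f x ≤ f y →
      ((Rm G m).induce (timeBag (Rm G m) f (f y))).Colorable c)
    (hQ : ∀ v ∉ Q, T ≤ touchTime f v) (hne : Q ≠ Set.univ) :
    ∃ t > T, ColorableStep G c Q {v | touchTime f v < t} := by
  let S : Set (Fin m × V) := {x | x.1 ∈ J ∧ x.2 ∉ Q}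
  let time : Fin m × V → ℕ := fun x => f (x.1, some x.2)
  obtain ⟨j₀, hj₀⟩ := Finset.card_pos.mp (by omega : 0 < J.card)
  obtain ⟨v₀, hv₀⟩ := (Set.ne_univ_iff_exists_notMem Q).mp hne
  obtain ⟨⟨b, v⟩, ⟨hb, hv⟩, hmin⟩ : ∃ x ∈ S, ∀ y ∈ S, time x ≤ time y :=
    ⟨_, Function.argminOn_mem time S ⟨(j₀, v₀), hj₀, hv₀⟩, fun _ => Function.argminOn_le time S⟩
  have hTv : T ≤ f (b, some v) := (hQ v hv).trans (touchTime_le f b v)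
  have hfirst : ∀ j ∈ J, ∀ w ∉ Q, f (b, some v) ≤ f (j, some w) := fun j hj w hw =>
    hmin (j, w) ⟨hj, hw⟩
  rcases le_or_gt (f (b, none)) (f (b, some v)) with hswept | hunswept
  · have hbag := hf (b, none) (b, some v) (Rm_adj_none_some.mpr rfl) hswept
    exact ⟨f (b, some v) + 1, by omega, hJ.colorableStep_of_apex_swept hcard hbag hb hswept
      (fun u hu => Nat.lt_succ_iff.mp hu) hfirst⟩
  · obtain ⟨t, ht, hstep⟩ :=
      hJ.exists_colorableStep_of_apex_unswept hcard hf hfirst hb rfl hunswept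
    exact ⟨t, hTv.trans_lt ht, hstep⟩

theorem pathColorable_of_sweepable_special_Rm [Fintype V] (hm : Fintype.card V + c < m)
    (h : Sweepable (SpecialStep (Rm G m) c) Set.univ) : PathColorable G c := by
  obtain ⟨f, hf⟩ := h.exists_special_time
  obtain ⟨J, hJ, hcard⟩ := exists_isFresh hm f
  refine pathColorable_of_sweepable <|
    univ_of_sublevel_progress (touchTime f) .refl fun T hT hne => ?_
  obtain ⟨t, ht, hstep⟩ := hJ.exists_colorableStep hcard hf (fun v hv => not_lt.mp hv) hne
  exact .inr ⟨t, ht, hT.tail ⟨fun v hv => hv.trans ht, hstep⟩⟩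

theorem pathColorable_of_pathColorable_Rm_Rm [Fintype V] {l K : ℕ} (hm : Fintype.card V + K < m)
    (hl : m * (Fintype.card V + 1) + (2 * K + 2) < l)
    (h : PathColorable (Rm (Rm G m) l) (K + 1)) : PathColorable G K :=
  pathColorable_of_sweepable_special_Rm hm (sweepable_special_of_pathColorable_Rm (by simpa) h)

end Improved

/-- Theorem 3: for `m ≥ n + k + 2` and `l ≥ m(n+1) + k + 3`,
`χ_P(R_l(R_m(G))) > k`. -/
theorem stmt_11 {V : Type u} [Fintype V] (G : SimpleGraph V) {n k m l : ℕ}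
    (hn : Fintype.card V = n) (hG : pathChromatic G = k)
    (hm : n + k + 2 ≤ m) (hl : m * (n + 1) + k + 3 ≤ l) :
    k < pathChromatic (Rm (Rm G m) l) := by
  by_contra! hle
  have hcol : PathColorable (Rm (Rm G m) l) k := pathColorable_of_pathChromatic_le hle
  have hkn : k ≤ n := hG ▸ hn ▸ pathChromatic_le (pathColorable_card G)
  obtain _ | K := k
  · exact hcol.isEmpty.false (⟨0, by omega⟩, none)
  -- The general bound on `l` has `2K` where `hl` has `K`; fewer layers of `G` make up for it.
  let inclusion : Rm (Rm G (n + K + 1)) l →g Rm (Rm G m) l :=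
    Rm.map (.refl _) (Rm.map (Fin.castLEEmb (by omega)) .id)
  have hl' : (n + K + 1) * (n + 1) + (2 * K + 2) < l := by nlinarith
  have hsmall : PathColorable G K :=
    pathColorable_of_pathColorable_Rm_Rm (by omega) (hn ▸ hl') (hcol.of_hom inclusion)
  exact absurd (pathChromatic_le hsmall) (by omega)
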